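/- Let v ∈ F_2^n have Hamming weight w ≥ 1 and let H be a parity-check matrix from Gallager's LDPC ensemble G(n, R, s) (a stack of (1-R)s independent blocks, each of the form F·Π with Π a uniform random n×n permutation matrix and F the block-indicator matrix). Then Pr(H v = 0) ≤ (√(2n))^{(1-R)s} · ((1 + (1 - 2w/n)^s)/2)^{n(1-R)}. -/

import Mathlib

open Stirling

lemma d_anti (k : ℕ) : Real.log (stirlingSeq (k+2)) - Real.log (stirlingSeq (k+3)) ≤
   Real.log (stirlingSeq (k+1)) - Real.log (stirlingSeq (k+2)) := by
  refine hasSum_le ?_ (log_stirlingSeq_sdiff_hasSum (k+1)) (log_stirlingSeq_sdiff_hasSum k)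
  intro i
  push_cast
  gcongr
  linarith

lemma d_anti' (k l : ℕ) : Real.log (stirlingSeq (k+l+1)) - Real.log (stirlingSeq (k+l+2)) ≤
   Real.log (stirlingSeq (k+1)) - Real.log (stirlingSeq (k+2)) := by
  induction l with
  | zero => exact le_rfl
  | succ l ih => exact (d_anti (k+l)).trans ih

lemma logQ (a b : ℕ) : Real.log (stirlingSeq (a+1)) + Real.log (stirlingSeq (b+1))
    ≤ Real.log 2 + Real.log (stirlingSeq (a+b+2)) := by
  induction a with
  | zero =>
    induction b with
    | zero =>
      have h2 : stirlingSeq 2 = Real.exp 1 ^ 2 / 4 := by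
        simp only [stirlingSeq]
        have : √(2 * ((2:ℕ):ℝ)) = 2 := by
          rw [show (2 * ((2:ℕ):ℝ)) = 2^2 by norm_num]; exact Real.sqrt_sq (by norm_num)
        rw [this]; norm_num [Nat.factorial]
        field_simp; norm_num; ring
      rw [← Real.log_mul (by simp [stirlingSeq]) (by simp [stirlingSeq]), ← Real.log_mul (by norm_num) (by simp [stirlingSeq])]
      apply le_of_eq
      congr 1
      simp only [zero_add, h2, stirlingSeq_one]
      have : √(2:ℝ) ^ 2 = 2 := Real.sq_sqrt (by norm_num)
      field_simp
      rw [this]; norm_num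
    | succ b ih =>
      have := d_anti' b 1
      simp only [zero_add] at *
      linarith
  | succ a ih =>
    have := d_anti' a (b+1)
    rw [show a + 1 + b + 2 = a + (b+1) + 2 by ring]
    rw [show a + b + 2 = a + (b+1) + 1 by ring] at ih
    linarith

lemma binom_bd (n w : ℕ) (hw : 1 ≤ w) (hwn : w ≤ n) :
    (w.factorial : ℝ) * (n-w).factorial ≤ √(2*n) * n.factorial * ((w/n:ℝ)^w * (1 - w/n)^(n-w)) := by
  have hn : (0:ℝ) < n := by exact_mod_cast (by omega : 0 < n)
  rcases hwn.eq_or_lt with rfl | h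
  · have : 1 ≤ √(2*(w:ℝ)) := by
      rw [Real.one_le_sqrt]
      have : (1:ℝ) ≤ w := by exact_mod_cast hw
      linarith
    rw [div_self hn.ne', Nat.sub_self]
    simp only [Nat.factorial_zero, Nat.cast_one, one_pow, pow_zero, mul_one]
    have : (0:ℝ) < w.factorial := by positivity
    nlinarith
  · obtain ⟨a, rfl⟩ : ∃ a, w = a + 1 := ⟨w-1, by omega⟩
    obtain ⟨b, rfl⟩ : ∃ b, n = a + b + 2 := ⟨n-a-2, by omega⟩
    have hQ := logQ a b
    have pos : ∀ k, 0 < stirlingSeq (k+1) := stirlingSeq'_pos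
    rw [← Real.log_mul (pos _).ne' (pos _).ne', ← Real.log_mul (by norm_num) (pos _).ne',
      Real.log_le_log_iff (mul_pos (pos _) (pos _)) (mul_pos (by norm_num) (pos _))] at hQ
    rw [show a + b + 2 - (a+1) = b + 1 by omega]
    have e1 : (1 - ((a+1:ℕ):ℝ)/((a+b+2:ℕ):ℝ)) = ((b+1:ℕ):ℝ)/((a+b+2:ℕ):ℝ) := by
      field_simp; push_cast; ring
    rw [e1]
    have hN : ((a+b+2:ℕ):ℝ) = ((a+1:ℕ):ℝ) + ((b+1:ℕ):ℝ) := by push_cast; ring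
    have hpow : a + b + 2 = (a+1) + (b+1) := by ring
    simp only [stirlingSeq] at hQ
    have hA : (0:ℝ) < ((a+1:ℕ):ℝ) := by positivity
    have hB : (0:ℝ) < ((b+1:ℕ):ℝ) := by positivity
    generalize hx : ((a+1:ℕ):ℝ) = x at *
    generalize hy : ((b+1:ℕ):ℝ) = y at *
    generalize hz : ((a+b+2:ℕ):ℝ) = z at *
    have hf1 : (0:ℝ) < (a+1).factorial := by positivity
    have hf2 : (0:ℝ) < (b+1).factorial := by positivity
    have hf3 : (0:ℝ) < (a+b+2).factorial := by positivity
    generalize ((a+1).factorial : ℝ) = f at *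
    generalize ((b+1).factorial : ℝ) = g at *
    generalize ((a+b+2).factorial : ℝ) = h at *
    rw [hpow] at hQ
    have e0 := Real.exp_pos 1
    generalize Real.exp 1 = e at *
    have hs : √(2*x) * √(2*y) ≤ z := by
      rw [← Real.sqrt_mul (by positivity)]
      apply Real.sqrt_le_iff.2
      constructor
      · positivity
      · rw [hN]; nlinarith [sq_nonneg (x-y)]
    have hz2 : √(2*z)^2 = 2*z := Real.sq_sqrt (by positivity)
    have p1 : 0 < √(2*x) := by positivity
    have p2 : 0 < √(2*y) := by positivity
    have p3 : 0 < √(2*z) := by positivity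
    generalize √(2*x) = r1 at *
    generalize √(2*y) = r2 at *
    generalize √(2*z) = r3 at *
    rw [pow_add _ (a+1) (b+1)] at hQ
    simp only [div_pow] at hQ ⊢
    have k1 : 0 < x^(a+1) := by positivity
    have k2 : 0 < y^(b+1) := by positivity
    have k3 : 0 < z^(a+1) := by positivity
    have k4 : 0 < z^(b+1) := by positivity
    have k5 : 0 < e^(a+1) := by positivity
    have k6 : 0 < e^(b+1) := by positivity
    generalize x^(a+1) = X at *
    generalize y^(b+1) = Y at *
    generalize z^(a+1) = Z at *
    generalize z^(b+1) = W at *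
    generalize e^(a+1) = E at *
    generalize e^(b+1) = G at *
    have h1 : f * g ≤ 2 * h * (X * Y) / (Z * W) * (r1 * r2) / r3 := by
      have e3 : f * g = (f / (r1 * (X / E)) * (g / (r2 * (Y / G)))) * (r1 * (X/E) * (r2 * (Y/G))) := by
        field_simp
      rw [e3]
      refine (mul_le_mul_of_nonneg_right hQ (by positivity)).trans (le_of_eq ?_)
      field_simp
    refine h1.trans ?_
    have : 2 * h * (X * Y) / (Z * W) * (r1 * r2) / r3 ≤ 2 * h * (X * Y) / (Z * W) * z / r3 := by
      gcongr
    refine this.trans (le_of_eq ?_)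
    field_simp
    linarith

lemma fiber_card (n w : ℕ) (v : Fin n → ZMod 2)
    (hw : (Finset.univ.filter fun j => v j = 1).card = w) (u : Fin n → ZMod 2) :
    (Finset.univ.filter fun σ : Equiv.Perm (Fin n) => (fun j => v (σ j)) = u).card
      ≤ w.factorial * (n-w).factorial := by
  by_cases h : ∃ σ₀ : Equiv.Perm (Fin n), (fun j => v (σ₀ j)) = u
  · obtain ⟨σ₀, rfl⟩ := h
    have hst := DomMulAct.stabilizer_card (α := Fin n) v
    have hle : (Finset.univ.filter fun σ : Equiv.Perm (Fin n) => (fun j => v (σ j)) = (fun j => v (σ₀ j))).card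
        ≤ (Finset.univ.filter fun σ : Equiv.Perm (Fin n) => v ∘ σ = v).card := by
      apply Finset.card_le_card_of_injOn (fun σ => σ * σ₀⁻¹)
      · intro σ hσ
        simp at hσ ⊢
        funext j
        simpa using congrFun hσ (σ₀⁻¹ j)
      · intro a _ b _ hab
        simpa using hab
    refine hle.trans (le_of_eq ?_)
    rw [← Fintype.card_subtype, hst]
    have h0 : Fintype.card {a // v a = 0} = n - w := by
      have hc := Finset.card_filter_add_card_filter_not (s := (Finset.univ : Finset (Fin n))) (fun j => v j = 1)
      have : (Finset.univ.filter fun j => ¬ v j = 1) = (Finset.univ.filter fun j => v j = 0) := by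
        ext j
        simp
        generalize v j = x
        revert x; decide
      rw [this, hw] at hc
      rw [Fintype.card_subtype]
      simp at hc
      omega
    have h1 : Fintype.card {a // v a = 1} = w := by rw [Fintype.card_subtype, hw]
    rw [show (Finset.univ : Finset (ZMod 2)) = {0, 1} by decide]
    rw [Finset.prod_pair (by decide), h0, h1, mul_comm]
  · rw [Finset.filter_eq_empty_iff.2]
    · simp
    · intro σ _ hσ
      exact h ⟨σ, hσ⟩

def qq (p : ℝ) (x : ZMod 2) : ℝ := if x = 1 then p else 1 - p
def chi (x : ZMod 2) : ℝ := if x = 0 then 1 else -1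

lemma chi_sum {ι : Type*} [DecidableEq ι] (S : Finset ι) (x : ι → ZMod 2) : chi (∑ j ∈ S, x j) = ∏ j ∈ S, chi (x j) := by
  induction S using Finset.induction_on with
  | empty => simp [chi]
  | insert a S ha ih =>
    rw [Finset.sum_insert ha, Finset.prod_insert ha, ← ih]
    generalize x a = y
    generalize ∑ j ∈ S, x j = z
    have key : ∀ y z : ZMod 2, y + z = 0 ↔ y = z := by decide
    have key2 : ∀ y : ZMod 2, y = 0 ∨ y = 1 := by decide
    unfold chi
    rcases key2 y with rfl | rfl <;> rcases key2 z with rfl | rfl <;> simp [key]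

lemma block (s : ℕ) (p : ℝ) : ∑ x : Fin s → ZMod 2, (∏ j, qq p (x j)) * (if ∑ j, x j = 0 then 1 else 0)
    = (1 + (1 - 2*p)^s)/2 := by
  have h : ∀ x : Fin s → ZMod 2, (∏ j, qq p (x j)) * (if ∑ j, x j = 0 then (1:ℝ) else 0)
     = ((∏ j, qq p (x j)) + ∏ j, (qq p (x j) * chi (x j)))/2 := by
    intro x
    rw [Finset.prod_mul_distrib, ← chi_sum]
    unfold chi
    split_ifs <;> ring
  simp_rw [h]
  rw [← Finset.sum_div, Finset.sum_add_distrib, ← Fintype.piFinset_univ,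
    ← Finset.prod_univ_sum (fun _ => Finset.univ) (fun (_ : Fin s) y => qq p y),
    ← Finset.prod_univ_sum (fun _ => Finset.univ) (fun (_ : Fin s) y => qq p y * chi y)]
  have u : (Finset.univ : Finset (ZMod 2)) = {0, 1} := by decide
  rw [u, Finset.sum_pair (by decide), Finset.sum_pair (by decide)]
  simp [qq, chi]
  ring

lemma total (m s : ℕ) (p : ℝ) : ∑ u : Fin m → Fin s → ZMod 2, (∏ i, ∏ j, qq p (u i j)) * (if ∀ i, ∑ j, u i j = 0 then 1 else 0)
    = ((1 + (1 - 2*p)^s)/2)^m := by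
  rw [← block]
  have h : ∀ u : Fin m → Fin s → ZMod 2, (∏ i, ∏ j, qq p (u i j)) * (if ∀ i, ∑ j, u i j = 0 then (1:ℝ) else 0)
    = ∏ i, ((∏ j, qq p (u i j)) * (if ∑ j, u i j = 0 then 1 else 0)) := by
    intro u
    rw [Finset.prod_mul_distrib, Finset.prod_ite_zero]
    simp
  simp_rw [h]
  rw [← Fintype.piFinset_univ, ← Finset.prod_univ_sum (fun _ => Finset.univ) (fun (_ : Fin m) (y : Fin s → ZMod 2) => (∏ j, qq p (y j)) * (if ∑ j, y j = 0 then (1:ℝ) else 0))]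
  simp

lemma total' (m s : ℕ) (p : ℝ) (F : Matrix (Fin m) (Fin (m*s)) (ZMod 2))
    (hF : ∀ i j, F i j = if (j : ℕ) / s = (i : ℕ) then 1 else 0) :
    ∑ u : Fin (m*s) → ZMod 2, (∏ j, qq p (u j)) * (if F.mulVec u = 0 then 1 else 0)
    = ((1 + (1 - 2*p)^s)/2)^m := by
  rw [← total]
  let e : (Fin m → Fin s → ZMod 2) ≃ (Fin (m*s) → ZMod 2) :=
    (Equiv.curry _ _ _).symm.trans (finProdFinEquiv.arrowCongr (Equiv.refl _))
  symm
  apply Fintype.sum_equiv e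
  intro u
  have he : ∀ i j, e u (finProdFinEquiv (i,j)) = u i j := by intro i j; simp [e]
  have h1 : ∏ j, qq p (e u j) = ∏ i, ∏ j, qq p (u i j) := by
    rw [← finProdFinEquiv.prod_comp, Fintype.prod_prod_type]
    simp_rw [he]
  have h2 : ∀ i, F.mulVec (e u) i = ∑ j, u i j := by
    intro i
    rw [Matrix.mulVec, dotProduct, ← finProdFinEquiv.sum_comp, Fintype.sum_prod_type]
    simp_rw [he, hF]
    rw [Finset.sum_eq_single i]
    · apply Finset.sum_congr rfl
      intro j _
      have : ((finProdFinEquiv (i,j) : Fin (m*s)) : ℕ) / s = i := by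
        have hj := j.2
        rw [finProdFinEquiv_apply_val, Nat.add_mul_div_left _ _ (by omega), Nat.div_eq_of_lt hj, zero_add]
      rw [this, if_pos rfl, one_mul]
    · intro i' _ hne
      apply Finset.sum_eq_zero
      intro j _
      have : ((finProdFinEquiv (i',j) : Fin (m*s)) : ℕ) / s = i' := by
        have hj := j.2
        rw [finProdFinEquiv_apply_val, Nat.add_mul_div_left _ _ (by omega), Nat.div_eq_of_lt hj, zero_add]
      rw [this, if_neg (fun h => hne (Fin.ext h)), zero_mul]
    · simp
  rw [h1]
  congr 1
  simp only [funext_iff, h2, Pi.zero_apply]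

lemma single (m s : ℕ) (F : Matrix (Fin m) (Fin (m*s)) (ZMod 2))
    (hF : ∀ i j, F i j = if (j : ℕ) / s = (i : ℕ) then 1 else 0)
    (v : Fin (m*s) → ZMod 2) (w : ℕ) (hw1 : 1 ≤ w)
    (hw : (Finset.univ.filter fun j => v j = 1).card = w) :
    (∑ σ : Equiv.Perm (Fin (m*s)), if F.mulVec (fun j => v (σ j)) = 0 then (1 : ℝ) else 0)
      ≤ √(2 * (m*s : ℕ)) * (m*s).factorial * ((1 + (1 - 2 * ((w : ℝ) / (m*s : ℕ))) ^ s) / 2) ^ m := by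
  have hwn : w ≤ m*s := by
    rw [← hw]; exact (Finset.card_le_univ _).trans (by simp)
  have hb := binom_bd (m*s) w hw1 hwn
  rw [← total' m s _ F hF]
  generalize hn : m*s = n at *
  set p : ℝ := (w:ℝ)/n with hp
  have hn0 : (0:ℝ) < n := by exact_mod_cast (by omega : 0 < n)
  have p0 : 0 < p := by rw [hp]; have : (0:ℝ) < w := by exact_mod_cast hw1
                        positivity
  have p1 : p ≤ 1 := by rw [hp, div_le_one hn0]; exact_mod_cast hwn
  have q0 : ∀ x, 0 ≤ qq p x := by intro x; unfold qq; split_ifs <;> linarith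
  have hQ : ∀ σ : Equiv.Perm (Fin n), ∏ j, qq p (v (σ j)) = p^w * (1-p)^(n-w) := by
    intro σ
    rw [Equiv.prod_comp σ (fun j => qq p (v j))]
    unfold qq
    rw [Finset.prod_ite, Finset.prod_const, Finset.prod_const, hw]
    have hc := Finset.card_filter_add_card_filter_not (s := (Finset.univ : Finset (Fin n))) (fun j => v j = 1)
    simp [hw] at hc
    congr 2
    omega
  set Q := p^w * (1-p)^(n-w)
  have hQ0 : 0 < Q := by
    by_contra hcon
    have : √(2*(n:ℝ)) * n.factorial * Q ≤ 0 := mul_nonpos_of_nonneg_of_nonpos (by positivity) (by linarith)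
    have : (0:ℝ) < w.factorial * (n-w).factorial := by positivity
    linarith
  set T := ∑ u : Fin n → ZMod 2, (∏ j, qq p (u j)) * (if F.mulVec u = 0 then (1:ℝ) else 0) with hT
  have hT0 : 0 ≤ T := Finset.sum_nonneg fun u _ => mul_nonneg (Finset.prod_nonneg fun j _ => q0 _) (by split_ifs <;> norm_num)
  have main : (∑ σ : Equiv.Perm (Fin n), if F.mulVec (fun j => v (σ j)) = 0 then (1 : ℝ) else 0) * Q
      ≤ (w.factorial * (n-w).factorial) * T := by
    have e1 : (∑ σ : Equiv.Perm (Fin n), if F.mulVec (fun j => v (σ j)) = 0 then (1 : ℝ) else 0) * Q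
      = ∑ u : Fin n → ZMod 2, ∑ σ : Equiv.Perm (Fin n) with (fun j => v (σ j)) = u,
         (∏ j, qq p (u j)) * (if F.mulVec u = 0 then (1:ℝ) else 0) := by
      rw [Finset.sum_mul, ← Finset.sum_fiberwise (Finset.univ) (fun (σ : Equiv.Perm (Fin n)) => (fun j => v (σ j)))]
      apply Finset.sum_congr rfl
      intro u _
      apply Finset.sum_congr rfl
      intro σ hσ
      simp only [Finset.mem_filter, Finset.mem_univ, true_and] at hσ
      rw [← hσ, hQ, mul_comm]
    rw [e1, hT, Finset.mul_sum]
    apply Finset.sum_le_sum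
    intro u _
    rw [Finset.sum_const, nsmul_eq_mul]
    apply mul_le_mul_of_nonneg_right
    · exact_mod_cast fiber_card n w v hw u
    · exact mul_nonneg (Finset.prod_nonneg fun j _ => q0 _) (by split_ifs <;> norm_num)
  have h2 := main.trans (mul_le_mul_of_nonneg_right hb hT0)
  refine le_of_mul_le_mul_right (h2.trans (le_of_eq ?_)) hQ0
  ring

theorem stmt_8 (m s : ℕ) (hs : 0 < s) (hm : 0 < m) (n : ℕ) (hn : n = m * s)
    (R : ℝ) (hR0 : 0 < R) (hR1 : R < 1)
    (L : ℕ) (hL : (L : ℝ) = (1 - R) * s)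
    (F : Matrix (Fin m) (Fin n) (ZMod 2))
    (hF : ∀ i j, F i j = if (j : ℕ) / s = (i : ℕ) then 1 else 0)
    (v : Fin n → ZMod 2) (w : ℕ) (hw1 : 1 ≤ w)
    (hw : (Finset.univ.filter fun j => v j = 1).card = w) :
    (∑ σ : Fin L → Equiv.Perm (Fin n),
        if ∀ i, F.mulVec (fun j => v (σ i j)) = 0 then (1 : ℝ) else 0)
      / (Fintype.card (Fin L → Equiv.Perm (Fin n)) : ℝ)
      ≤ Real.sqrt (2 * n) ^ L
          * ((1 + (1 - 2 * (w : ℝ) / n) ^ s) / 2) ^ ((n : ℝ) * (1 - R)) := by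
  subst hn
  have hexp : ((m*s : ℕ):ℝ) * (1-R) = ((m * L : ℕ) : ℝ) := by
    push_cast; rw [hL]; ring
  rw [hexp, Real.rpow_natCast, pow_mul, ← mul_pow]
  have e1 : (∑ σ : Fin L → Equiv.Perm (Fin (m*s)),
        if ∀ i, F.mulVec (fun j => v (σ i j)) = 0 then (1 : ℝ) else 0)
      = (∑ σ : Equiv.Perm (Fin (m*s)), if F.mulVec (fun j => v (σ j)) = 0 then (1 : ℝ) else 0)^L := by
    have h : ∀ σ : Fin L → Equiv.Perm (Fin (m*s)), (if ∀ i, F.mulVec (fun j => v (σ i j)) = 0 then (1 : ℝ) else 0)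
       = ∏ i, if F.mulVec (fun j => v (σ i j)) = 0 then (1 : ℝ) else 0 := by
      intro σ
      rw [Finset.prod_ite_zero]; simp
    simp_rw [h]
    rw [← Fintype.piFinset_univ, ← Finset.prod_univ_sum (fun _ => Finset.univ) (fun (_ : Fin L) (y : Equiv.Perm (Fin (m*s))) => if F.mulVec (fun j => v (y j)) = 0 then (1 : ℝ) else 0)]
    simp
  have e2 : (Fintype.card (Fin L → Equiv.Perm (Fin (m*s))) : ℝ) = ((m*s).factorial : ℝ)^L := by
    simp [Fintype.card_perm]
  rw [e1, e2, ← div_pow]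
  apply pow_le_pow_left₀
  · exact div_nonneg (Finset.sum_nonneg fun _ _ => by split_ifs <;> norm_num) (by positivity)
  rw [div_le_iff₀ (by positivity)]
  refine (single m s F hF v w hw1 hw).trans (le_of_eq ?_)
  rw [mul_div_assoc]
  ring
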